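/- Let s be a nonnegative integer and n a positive integer, and let (α, β) be chosen uniformly at random from C(s,n) × C(s,n). Then the expected value of EMD(α, β) equals (s(n−1)/(4s+4n−2)) · C(2s+2n, 2s+1) / C(s+n−1, s)²; equivalently, (4s+4n−2) · Σ_{(α,β) ∈ C(s,n)×C(s,n)} EMD(α, β) = s(n−1) · C(2s+2n, 2s+1). (Theorem 4.3, closed form for the expected EMD.) -/

import Mathlib

open Finset

/-- The one-dimensional earth mover's distance between two weak compositions
`α, β` of the same number `s` into `n` parts:
`EMD(α,β) = Σ_{j=1}^n |Σ_{i=1}^j (α_i - β_i)|`. -/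
def EMD {n : ℕ} (α β : Fin n → ℕ) : ℕ :=
  ∑ j : Fin n, (∑ i ∈ Finset.univ.filter (fun i : Fin n => i ≤ j),
      ((α i : ℤ) - (β i : ℤ))).natAbs

/-!
Summing over the cuts `j`, the total EMD counts pairs of compositions weighted by the distance `d`
between their masses in the first `j` parts. Let `G d`, a power series in `X` and `Y`, count pairs
of compositions with equally many parts whose masses differ by `d`, with `X` marking the smaller
mass and `Y` the number of parts; the pairs at distance `d` across all cuts are then counted by
`X ^ d * G d ^ 2`. Pascal's rule is a constant-coefficient recurrence for `G`, so `G` is geometric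
in `d`; with `Δ = (1 - X - Y) ^ 2 - 4 * X * Y` this gives `Δ * G 0 ^ 2 = 1` and
`Δ * ∑ d, d * X ^ d * G d ^ 2 = X * G 0 ^ 2`. The total EMD therefore has generating function
`2 * X * Y / Δ ^ 2`. The binomial coefficients `(2a + 2i).choose (2a)` and
`(2a + 2i + 2).choose (2a + 1)` have generating functions `(1 - X - Y) / Δ` and `2 / Δ`, and
applying the Euler operator `X ∂_X + Y ∂_Y` to the former produces the denominator `Δ ^ 2`.
-/

section Compositions

variable {ι μ M : Type*} [DecidableEq ι] [AddCommMonoid M]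

theorem card_filter_piAntidiag_union [AddCommMonoid μ] [HasAntidiagonal μ] [DecidableEq μ]
    {s t : Finset ι} (hst : Disjoint s t) (a b : μ) :
    #{α ∈ piAntidiag (s ∪ t) (a + b) | ∑ i ∈ s, α i = a ∧ ∑ i ∈ t, α i = b} =
      #(piAntidiag s a) * #(piAntidiag t b) := by
  rw [← card_product]
  refine card_bij' (fun α _ ↦ (s.piecewise α 0, t.piecewise α 0))
    (fun q _ ↦ s.piecewise q.1 q.2) ?_ ?_ ?_ ?_
  · intro α h
    obtain ⟨-, hs, ht⟩ := mem_filter.1 h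
    rw [mem_product, mem_piAntidiag, mem_piAntidiag, sum_piecewise, sum_piecewise]
    simp +contextual [piecewise, hs, ht]
  · rintro ⟨β, γ⟩ h
    obtain ⟨⟨hs, -⟩, ht, hγ⟩ : (∑ i ∈ s, β i = a ∧ _) ∧ ∑ i ∈ t, γ i = b ∧ _ := by simpa using h
    simp only [mem_filter, mem_piAntidiag, sum_union hst, sum_piecewise, inter_self, sdiff_self,
      sum_empty, zero_add, hst.symm.sdiff_eq_left, disjoint_iff_inter_eq_empty.1 hst.symm,
      hs, ht]
    grind [piecewise]
  · intro α h
    have support_subset := (mem_piAntidiag.1 (mem_filter.1 h).1).2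
    ext i
    by_cases hs : i ∈ s <;> by_cases ht : i ∈ t <;> simp_all [not_imp_comm]
  · rintro ⟨β, γ⟩ h
    obtain ⟨⟨-, hβ⟩, -, hγ⟩ : (∑ i ∈ s, β i = a ∧ _) ∧ ∑ i ∈ t, γ i = b ∧ _ := by simpa using h
    have notMem_right {i : ι} (hi : i ∈ s) : i ∉ t := disjoint_left.1 hst hi
    ext i <;> simp only [piecewise, Pi.zero_apply] <;> grind

theorem card_piAntidiag_nat (s : Finset ι) (n : ℕ) : #(piAntidiag s n) = (#s).multichoose n := by
  rw [← card_finsuppAntidiag_nat_eq_multichoose n]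
  refine card_bij' (fun f hf ↦ Finsupp.onFinset s f (mem_piAntidiag.1 hf).2) (fun f _ ↦ f)
    ?_ ?_ ?_ ?_
  · simp +contextual
  · simp +contextual [Finset.subset_iff]
  · simp
  · intro f _; ext; simp

theorem sum_piAntidiag_comp_sum [Fintype ι] (J : Finset ι) (n : ℕ) (f : ℕ → M) :
    ∑ α ∈ piAntidiag univ n, f (∑ i ∈ J, α i) =
      ∑ p ∈ antidiagonal n, ((#J).multichoose p.1 * (#Jᶜ).multichoose p.2) • f p.1 := by
  have maps_to : ∀ α ∈ piAntidiag univ n, (∑ i ∈ J, α i, ∑ i ∈ Jᶜ, α i) ∈ antidiagonal n := by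
    simp +contextual [sum_add_sum_compl]
  rw [← sum_fiberwise_of_maps_to maps_to]
  refine sum_congr rfl fun p hp ↦ ?_
  rw [← card_piAntidiag_nat, ← card_piAntidiag_nat,
    ← card_filter_piAntidiag_union disjoint_compl_right, union_compl,
    HasAntidiagonal.mem_antidiagonal.1 hp]
  simp only [Prod.ext_iff]
  exact sum_eq_card_nsmul fun α hα ↦ by rw [(mem_filter.1 hα).2.1]

theorem sum_antidiagonal_mul_sub (n : ℕ) (F : ℕ × ℕ → ℕ × ℕ → ℕ) :
    ∑ p ∈ antidiagonal n, ∑ q ∈ antidiagonal n, F p q * (p.1 - q.1) =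
      ∑ x ∈ antidiagonal n, ∑ r ∈ antidiagonal x.2,
        F (r.1 + x.1, r.2) (r.1, r.2 + x.1) * x.1 := by
  simp only [sum_sigma']
  -- Only pairs with `p.1 = q.1 + d` and `d > 0` survive the truncated subtraction.
  refine sum_bij_ne_zero (fun x _ _ ↦ ⟨(x.1.1 - x.2.1, x.1.2 + x.2.1), (x.2.1, x.1.2)⟩) ?_ ?_ ?_ ?_
  · simp only [mem_sigma, HasAntidiagonal.mem_antidiagonal, ne_eq, mul_eq_zero, not_or]
    lia
  · rintro ⟨⟨a, b⟩, c, e⟩ h h' ⟨⟨a', b'⟩, c', e'⟩ k k' eq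
    simp only [mem_sigma, HasAntidiagonal.mem_antidiagonal, ne_eq, mul_eq_zero, not_or,
      Sigma.mk.injEq, Prod.mk.injEq, heq_eq_eq] at *
    lia
  · rintro ⟨⟨d, m⟩, a, b⟩ h h'
    simp only [mem_sigma, HasAntidiagonal.mem_antidiagonal] at h
    refine ⟨⟨(a + d, b), (a, b + d)⟩, ?_, ?_, ?_⟩ <;> simp <;> lia
  · rintro ⟨⟨a, b⟩, c, e⟩ h h'
    simp only [mem_sigma, HasAntidiagonal.mem_antidiagonal, ne_eq, mul_eq_zero, not_or] at h h'
    obtain ⟨d, rfl⟩ := Nat.exists_eq_add_of_le (show c ≤ a by lia)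
    obtain rfl : e = b + d := by lia
    simp

theorem sum_antidiagonal_mul_natAbs_sub (n : ℕ) {F : ℕ × ℕ → ℕ × ℕ → ℕ}
    (F_comm : ∀ p q, F p q = F q p) :
    ∑ p ∈ antidiagonal n, ∑ q ∈ antidiagonal n, F p q * ((p.1 : ℤ) - q.1).natAbs =
      2 * ∑ x ∈ antidiagonal n, ∑ r ∈ antidiagonal x.2,
        F (r.1 + x.1, r.2) (r.1, r.2 + x.1) * x.1 := by
  have natAbs_eq (a b : ℕ) : ((a : ℤ) - b).natAbs = (a - b) + (b - a) := by lia
  simp only [natAbs_eq, mul_add, sum_add_distrib]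
  rw [← sum_antidiagonal_mul_sub, two_mul]
  congr 1
  rw [sum_comm]
  simp only [F_comm]

/-- Half the total of `|a - b|` over all pairs of weak compositions of `n` into `k + l` parts, where
`a` and `b` are the masses that the two compositions put in the first `k` parts. The index `x.1` is
the distance `|a - b|`, and `r` is the pair of the smaller masses on the two sides of the cut. -/
def halfCutDistance (k l n : ℕ) : ℕ :=
  ∑ x ∈ antidiagonal n, ∑ r ∈ antidiagonal x.2,
    k.multichoose r.1 * k.multichoose (r.1 + x.1) *
      (l.multichoose r.2 * l.multichoose (r.2 + x.1)) * x.1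

theorem sum_piAntidiag_natAbs_sub [Fintype ι] (J : Finset ι) (n : ℕ) :
    ∑ α ∈ piAntidiag univ n, ∑ β ∈ piAntidiag univ n,
        ((∑ i ∈ J, α i : ℕ) - (∑ i ∈ J, β i : ℕ) : ℤ).natAbs =
      2 * halfCutDistance #J #Jᶜ n := by
  let w (p : ℕ × ℕ) : ℕ := (#J).multichoose p.1 * (#Jᶜ).multichoose p.2
  calc
    _ = ∑ p ∈ antidiagonal n, ∑ q ∈ antidiagonal n, w p * w q * ((p.1 : ℤ) - q.1).natAbs := by
      have sum_right (a : ℕ) :=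
        sum_piAntidiag_comp_sum J n fun b ↦ ((a : ℤ) - (b : ℕ)).natAbs
      rw [sum_piAntidiag_comp_sum J n fun a ↦
        ∑ β ∈ piAntidiag univ n, ((a : ℤ) - (∑ i ∈ J, β i : ℕ)).natAbs]
      simp only [sum_right, w, smul_eq_mul, mul_sum, mul_assoc]
    _ = 2 * ∑ x ∈ antidiagonal n, ∑ r ∈ antidiagonal x.2,
          w (r.1 + x.1, r.2) * w (r.1, r.2 + x.1) * x.1 :=
      sum_antidiagonal_mul_natAbs_sub n fun p q ↦ mul_comm (w p) (w q)
    _ = _ := by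
      refine congrArg _ (sum_congr rfl fun x _ ↦ sum_congr rfl fun r _ ↦ ?_)
      ring

end Compositions

theorem EMD_eq_sum_natAbs {n : ℕ} (α β : Fin n → ℕ) :
    EMD α β = ∑ j, ((∑ i ∈ Iic j, α i : ℕ) - (∑ i ∈ Iic j, β i : ℕ) : ℤ).natAbs := by
  simp only [EMD, sum_sub_distrib, Nat.cast_sum, filter_ge_eq_Iic]

theorem sum_EMD_eq_sum_halfCutDistance (s n : ℕ) :
    ∑ p ∈ Finset.Nat.antidiagonalTuple (n + 1) s ×ˢ Finset.Nat.antidiagonalTuple (n + 1) s,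
        EMD p.1 p.2 =
      2 * ∑ j ∈ range n, halfCutDistance (j + 1) (n - j) s := by
  let cut (j : Fin (n + 1)) : ℕ := ∑ α ∈ piAntidiag univ s, ∑ β ∈ piAntidiag univ s,
    ((∑ i ∈ Iic j, α i : ℕ) - (∑ i ∈ Iic j, β i : ℕ) : ℤ).natAbs
  have cut_castSucc (j : Fin n) : cut j.castSucc = 2 * halfCutDistance (j + 1) (n - j) s := by
    simp [cut, sum_piAntidiag_natAbs_sub, card_compl, -Nat.cast_sum]
  have cut_last : cut (Fin.last n) = 0 := by
    refine sum_eq_zero fun α hα ↦ sum_eq_zero fun β hβ ↦ ?_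
    rw [← Fin.top_eq_last, Iic_top, (mem_piAntidiag.1 hα).1, (mem_piAntidiag.1 hβ).1, sub_self,
      Int.natAbs_zero]
  calc
    _ = ∑ j, cut j := by
      simp only [← piAntidiag_univ_fin_eq_antidiagonalTuple, EMD_eq_sum_natAbs, sum_product, cut]
      exact sum_comm_cycle
    _ = ∑ j : Fin n, 2 * halfCutDistance (j + 1) (n - j) s := by
      simp only [Fin.sum_univ_castSucc, cut_castSucc, cut_last, add_zero]
    _ = 2 * ∑ j ∈ range n, halfCutDistance (j + 1) (n - j) s := by
      rw [Fin.sum_univ_eq_sum_range fun j ↦ 2 * halfCutDistance (j + 1) (n - j) s, mul_sum]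

section GeneratingFunctions

open scoped PowerSeries
open PowerSeries (X C coeff coeff_zero_X_mul coeff_succ_X_mul coeff_C_mul coeff_one)

section Recurrence

variable {R : Type*} [CommRing R] {c : R⟦X⟧} {g : ℕ → R⟦X⟧}

theorem mul_eq_sq_of_recurrence (hg : ∀ d, c * g (d + 1) = X * g (d + 2) + g d) (d : ℕ) :
    g (d + 2) * g d = g (d + 1) ^ 2 := by
  have defect_eq_X_mul (d : ℕ) : g (d + 2) * g d - g (d + 1) ^ 2 =
      X * (g (d + 3) * g (d + 1) - g (d + 2) ^ 2) := by
    linear_combination g (d + 1) * hg (d + 1) - g (d + 2) * hg d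
  have X_pow_dvd (k : ℕ) : ∀ d, X ^ k ∣ g (d + 2) * g d - g (d + 1) ^ 2 := by
    induction k with
    | zero => simp
    | succ k ih =>
      intro d
      rw [defect_eq_X_mul, pow_succ']
      exact mul_dvd_mul_left X (ih (d + 1))
  rw [← sub_eq_zero]
  ext k
  exact PowerSeries.X_pow_dvd_iff.1 (X_pow_dvd (k + 1) d) k k.lt_succ_self

theorem disc_mul_sq_zero_of_recurrence (hg : ∀ d, c * g (d + 1) = X * g (d + 2) + g d)
    (hg₀ : c * g 0 = 1 + 2 * X * g 1) : (c ^ 2 - 4 * X) * g 0 ^ 2 = 1 := by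
  linear_combination (c * g 0 - 2 * X * g 1 + 1) * hg₀ + 4 * X * g 0 * hg 0 +
    4 * X ^ 2 * mul_eq_sq_of_recurrence hg 0

theorem disc_mul_sum_of_recurrence (hg : ∀ d, c * g (d + 1) = X * g (d + 2) + g d) (n : ℕ) :
    (c ^ 2 - 4 * X) * ∑ d ∈ range (n + 1), d • (X ^ d * g d ^ 2) =
      X * g 0 ^ 2 +
        X ^ (n + 1) * ((n : R⟦X⟧) * X * g (n + 1) ^ 2 - ((n : R⟦X⟧) + 1) * g n ^ 2) := by
  have second_difference (d : ℕ) : (c ^ 2 - 4 * X) * g (d + 1) ^ 2 =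
      X ^ 2 * g (d + 2) ^ 2 - 2 * X * g (d + 1) ^ 2 + g d ^ 2 := by
    linear_combination (c * g (d + 1) + X * g (d + 2) + g d) * hg d +
      2 * X * mul_eq_sq_of_recurrence hg d
  induction n with
  | zero => simp
  | succ n ih =>
    rw [sum_range_succ, mul_add, ih, nsmul_eq_mul]
    push_cast
    linear_combination ((n : R⟦X⟧) + 1) * X ^ (n + 1) * second_difference n

end Recurrence

section Bivariate

/- In `R⟦X⟧⟦X⟧` the outer variable `X` marks mass and the inner variable `Y` marks parts. -/
local notation "Y" => C X

section Euler

variable {R : Type*} [Semiring R]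

theorem ext_coeff_coeff {f g : R⟦X⟧⟦X⟧}
    (h : ∀ a i, coeff i (coeff a f) = coeff i (coeff a g)) : f = g :=
  PowerSeries.ext fun a ↦ PowerSeries.ext (h a)

/-- The Euler operator `X ∂_X + Y ∂_Y`. -/
noncomputable def euler : R⟦X⟧⟦X⟧ →+ R⟦X⟧⟦X⟧ where
  toFun f := PowerSeries.mk fun a ↦ PowerSeries.mk fun i ↦ (a + i : R) * coeff i (coeff a f)
  map_zero' := ext_coeff_coeff fun a i ↦ by simp
  map_add' f g := ext_coeff_coeff fun a i ↦ by simp [mul_add]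

theorem coeff_coeff_euler (f : R⟦X⟧⟦X⟧) (a i : ℕ) :
    coeff i (coeff a (euler f)) = (a + i) * coeff i (coeff a f) := by
  simp [euler]

theorem euler_one : euler (1 : R⟦X⟧⟦X⟧) = 0 := by
  refine ext_coeff_coeff fun a i ↦ ?_
  rw [coeff_coeff_euler]
  rcases a with _ | a <;> rcases i with _ | i <;> simp [coeff_one]

theorem euler_X_mul (f : R⟦X⟧⟦X⟧) : euler (X * f) = X * (euler f + f) := by
  refine ext_coeff_coeff fun a i ↦ ?_
  rcases a with _ | a <;>
    simp only [coeff_coeff_euler, coeff_zero_X_mul, coeff_succ_X_mul, map_add, map_zero, mul_zero]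
  push_cast
  noncomm_ring

theorem euler_Y_mul (f : R⟦X⟧⟦X⟧) : euler (Y * f) = Y * (euler f + f) := by
  refine ext_coeff_coeff fun a i ↦ ?_
  rcases i with _ | i <;>
    simp only [coeff_coeff_euler, coeff_C_mul, coeff_zero_X_mul, coeff_succ_X_mul, map_add,
      mul_zero]
  push_cast
  noncomm_ring

end Euler

/-- The power series `∑ f a i * X ^ a * Y ^ i`. -/
noncomputable def bivariate (f : ℕ → ℕ → ℕ) : ℤ⟦X⟧⟦X⟧ :=
  PowerSeries.mk fun a ↦ PowerSeries.mk fun i ↦ (f a i : ℤ)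

theorem coeff_coeff_bivariate (f : ℕ → ℕ → ℕ) (a i : ℕ) :
    coeff i (coeff a (bivariate f)) = f a i := by
  simp [bivariate]

/-- The generating function of pairs of weak compositions of `a` and of `a + d` into equally many
parts. The exponent of `Y` is one less than the number of parts, which is thus positive. -/
noncomputable def pairSeries (d : ℕ) : ℤ⟦X⟧⟦X⟧ :=
  bivariate fun a i ↦ (i + 1).multichoose a * (i + 1).multichoose (a + d)

theorem pairSeries_recurrence (d : ℕ) :
    (1 + X - Y) * pairSeries (d + 1) = X * pairSeries (d + 2) + pairSeries d := by
  suffices pairSeries (d + 1) + X * pairSeries (d + 1) =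
      Y * pairSeries (d + 1) + X * pairSeries (d + 2) + pairSeries d by
    linear_combination this
  refine ext_coeff_coeff fun a i ↦ ?_
  rcases a with _ | a <;> rcases i with _ | i <;>
    simp only [pairSeries, map_add, map_zero, coeff_zero_X_mul, coeff_succ_X_mul, coeff_C_mul,
      coeff_coeff_bivariate]
  · simp
  · have pascal := Nat.multichoose_succ_succ (i + 1) d
    simp [pascal]
  · simp
  · have pascal := Nat.multichoose_succ_succ (i + 1) a
    have pascal_shift := Nat.multichoose_succ_succ (i + 1) (a + 1 + d)
    ring_nf at pascal pascal_shift ⊢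
    push_cast [pascal, pascal_shift]
    ring

theorem pairSeries_recurrence_zero :
    (1 + X - Y) * pairSeries 0 = 1 + 2 * X * pairSeries 1 := by
  suffices pairSeries 0 + X * pairSeries 0 =
      1 + Y * pairSeries 0 + X * pairSeries 1 + X * pairSeries 1 by
    linear_combination this
  refine ext_coeff_coeff fun a i ↦ ?_
  rcases a with _ | a <;> rcases i with _ | i <;>
    simp only [pairSeries, map_add, map_zero, coeff_zero_X_mul, coeff_succ_X_mul, coeff_C_mul,
      coeff_coeff_bivariate]
  · simp
  · simp [coeff_one]
  · simp [coeff_one]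
  · have pascal := Nat.multichoose_succ_succ (i + 1) a
    simp only [pascal, coeff_one, a.succ_ne_zero, if_false, map_zero, add_zero]
    push_cast
    ring

/-- The discriminant `Δ` of the characteristic polynomial `X * t ^ 2 - (1 + X - Y) * t + 1` of the
recurrence for `pairSeries`; it also equals `(1 - X - Y) ^ 2 - 4 * X * Y`. -/
noncomputable def disc : ℤ⟦X⟧⟦X⟧ := (1 + X - Y) ^ 2 - 4 * X

/-- The generating function of the binomial coefficients `N.choose k` with `N` and `k` even. -/
noncomputable def evenSeries : ℤ⟦X⟧⟦X⟧ :=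
  bivariate fun a i ↦ (2 * a + 2 * i).choose (2 * a)

/-- The generating function of the binomial coefficients `N.choose k` with `N` even, `k` odd. -/
noncomputable def oddSeries : ℤ⟦X⟧⟦X⟧ :=
  bivariate fun a i ↦ (2 * a + 2 * i + 2).choose (2 * a + 1)

theorem choose_add_two_add_two (n k : ℕ) :
    (n + 2).choose (k + 2) = n.choose k + 2 * n.choose (k + 1) + n.choose (k + 2) := by
  simp only [Nat.choose_succ_succ']
  ring

theorem evenSeries_eq :
    evenSeries = 1 + X * evenSeries + Y * evenSeries + 2 * X * Y * oddSeries := by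
  suffices evenSeries =
      1 + X * evenSeries + Y * evenSeries + X * (Y * oddSeries) + X * (Y * oddSeries) by
    linear_combination this
  refine ext_coeff_coeff fun a i ↦ ?_
  rcases a with _ | a <;> rcases i with _ | i <;>
    simp only [evenSeries, oddSeries, map_add, map_zero, coeff_zero_X_mul, coeff_succ_X_mul,
      coeff_C_mul, coeff_coeff_bivariate]
  · simp
  · simp [coeff_one]
  · simp [coeff_one]
  · have pascal := choose_add_two_add_two (2 * a + 2 * i + 2) (2 * a)
    simp only [coeff_one, a.succ_ne_zero, if_false, map_zero]
    ring_nf at pascal ⊢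
    push_cast [pascal]
    ring

theorem oddSeries_eq :
    oddSeries = X * oddSeries + Y * oddSeries + 2 * evenSeries := by
  suffices oddSeries = X * oddSeries + Y * oddSeries + evenSeries + evenSeries by
    linear_combination this
  refine ext_coeff_coeff fun a i ↦ ?_
  rcases a with _ | a <;> rcases i with _ | i <;>
    simp only [evenSeries, oddSeries, map_add, map_zero, coeff_zero_X_mul, coeff_succ_X_mul,
      coeff_C_mul, coeff_coeff_bivariate]
  · simp
  · simp only [mul_zero, zero_add, Nat.choose_one_right, Nat.choose_zero_right]
    push_cast
    ring
  · simp only [mul_zero, add_zero, Nat.choose_self, Nat.choose_succ_self_right]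
    push_cast
    ring
  · have pascal := choose_add_two_add_two (2 * a + 2 * i + 4) (2 * a + 1)
    ring_nf at pascal ⊢
    push_cast [pascal]
    ring

theorem disc_mul_evenSeries : disc * evenSeries = 1 - X - Y := by
  rw [disc]
  linear_combination (1 - X - Y) * evenSeries_eq + 2 * X * Y * oddSeries_eq

theorem disc_mul_oddSeries : disc * oddSeries = 2 := by
  rw [disc]
  linear_combination (1 - X - Y) * oddSeries_eq + 2 * evenSeries_eq

theorem disc_sq_mul_euler_evenSeries :
    disc ^ 2 * (2 * euler evenSeries + 2 * evenSeries - oddSeries) = 16 * X * Y := by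
  have euler_evenSeries : (1 - X - Y) * euler evenSeries =
      (X + Y) * evenSeries + 2 * X * Y * (euler oddSeries + 2 * oddSeries) := by
    have h := congrArg euler evenSeries_eq
    rw [mul_assoc, mul_assoc, two_mul] at h
    simp only [map_add, euler_one, euler_X_mul, euler_Y_mul] at h
    linear_combination h
  have euler_oddSeries : (1 - X - Y) * euler oddSeries =
      (X + Y) * oddSeries + 2 * euler evenSeries := by
    have h := congrArg euler oddSeries_eq
    rw [two_mul] at h
    simp only [map_add, euler_X_mul, euler_Y_mul] at h
    linear_combination h
  have disc_mul_euler : disc * euler evenSeries =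
      (1 - X - Y) * (X + Y) * evenSeries + 2 * X * Y * (2 - X - Y) * oddSeries := by
    rw [disc]
    linear_combination (1 - X - Y) * euler_evenSeries + 2 * X * Y * euler_oddSeries
  have disc_eq : disc = (1 - X - Y) ^ 2 - 4 * X * Y := by rw [disc]; ring
  linear_combination 2 * disc * disc_mul_euler +
    (2 * (1 - X - Y) * (X + Y) + 2 * disc) * disc_mul_evenSeries +
    (4 * X * Y * (2 - X - Y) - disc) * disc_mul_oddSeries + (2 * (1 - X - Y) - 2) * disc_eq

/-- The generating function `∑ d, d * X ^ d * G d ^ 2` of half the total distance across a cut, for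
`G = pairSeries`. The sum is truncated at `d = s`, which does not affect the coefficient of `X ^ s`,
and the exponent of `Y` is two less than the number of parts. -/
noncomputable def truncatedCutSeries (s : ℕ) : ℤ⟦X⟧⟦X⟧ :=
  ∑ d ∈ range (s + 1), d • (X ^ d * pairSeries d ^ 2)

theorem X_pow_dvd_truncatedCutSeries_sub (s : ℕ) :
    X ^ (s + 1) ∣
      16 • (Y * truncatedCutSeries s) - (2 • euler evenSeries + 2 • evenSeries - oddSeries) := by
  have disc_mul_sq : disc * pairSeries 0 ^ 2 = 1 :=
    disc_mul_sq_zero_of_recurrence pairSeries_recurrence pairSeries_recurrence_zero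
  have disc_isUnit : IsUnit (disc ^ 2) := (IsUnit.of_mul_eq_one _ disc_mul_sq).pow 2
  obtain ⟨r, hr⟩ : ∃ r, disc * truncatedCutSeries s = X * pairSeries 0 ^ 2 + X ^ (s + 1) * r :=
    ⟨_, by rw [disc, truncatedCutSeries]; exact disc_mul_sum_of_recurrence pairSeries_recurrence s⟩
  rw [← disc_isUnit.dvd_mul_left]
  refine ⟨16 * Y * disc * r, ?_⟩
  linear_combination 16 * Y * disc * hr + 16 * X * Y * disc_mul_sq - disc_sq_mul_euler_evenSeries

theorem coeff_truncatedCutSeries (s n : ℕ) :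
    coeff n (coeff s (truncatedCutSeries s)) =
      ∑ m ∈ antidiagonal n, (halfCutDistance (m.1 + 1) (m.2 + 1) s : ℤ) := by
  have coeff_sq (d a : ℕ) : coeff n (coeff a (pairSeries d ^ 2)) =
      ∑ r ∈ antidiagonal a, ∑ m ∈ antidiagonal n,
        (((m.1 + 1).multichoose r.1 * (m.1 + 1).multichoose (r.1 + d) *
          ((m.2 + 1).multichoose r.2 * (m.2 + 1).multichoose (r.2 + d)) : ℕ) : ℤ) := by
    simp only [sq, PowerSeries.coeff_mul, map_sum, pairSeries, coeff_coeff_bivariate, Nat.cast_mul]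
  have coeff_summand (d : ℕ) (hd : d ∈ range (s + 1)) :
      coeff n (coeff s (d • (X ^ d * pairSeries d ^ 2))) =
        d • coeff n (coeff (s - d) (pairSeries d ^ 2)) := by
    rw [map_nsmul, map_nsmul, PowerSeries.coeff_X_pow_mul', if_pos (mem_range_succ_iff.1 hd)]
  simp only [truncatedCutSeries, map_sum, halfCutDistance, Nat.cast_sum]
  rw [sum_congr rfl coeff_summand, sum_comm, Nat.sum_antidiagonal_eq_sum_range_succ_mk]
  refine sum_congr rfl fun d _ ↦ ?_
  rw [coeff_sq, sum_comm]
  simp only [smul_sum, nsmul_eq_mul, Nat.cast_mul, mul_comm (d : ℤ)]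

theorem coeff_Y_mul_truncatedCutSeries (s n : ℕ) :
    16 * coeff n (coeff s (Y * truncatedCutSeries s)) + (2 * s + 2 * n + 2).choose (2 * s + 1) =
      (2 * (s + n + 1) * (2 * s + 2 * n).choose (2 * s) : ℤ) := by
  have coeff_eq := congrArg (coeff n)
    (PowerSeries.X_pow_dvd_iff.1 (X_pow_dvd_truncatedCutSeries_sub s) s s.lt_succ_self)
  simp only [map_sub, map_add, map_nsmul, coeff_coeff_euler, evenSeries, oddSeries,
    coeff_coeff_bivariate, map_zero] at coeff_eq
  simp only [nsmul_eq_mul] at coeff_eq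
  push_cast at coeff_eq
  linear_combination coeff_eq

theorem sum_EMD_eq_coeff (s n : ℕ) :
    ∑ p ∈ Finset.Nat.antidiagonalTuple (n + 1) s ×ˢ Finset.Nat.antidiagonalTuple (n + 1) s,
        (EMD p.1 p.2 : ℤ) = 2 * coeff n (coeff s (Y * truncatedCutSeries s)) := by
  rw [← Nat.cast_sum, sum_EMD_eq_sum_halfCutDistance, coeff_C_mul]
  cases n with
  | zero => rw [coeff_zero_X_mul]; simp
  | succ n =>
    rw [coeff_succ_X_mul, coeff_truncatedCutSeries, Nat.sum_antidiagonal_eq_sum_range_succ_mk]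
    push_cast
    refine congrArg _ (sum_congr rfl fun j hj ↦ ?_)
    rw [Nat.sub_add_comm (mem_range_succ_iff.1 hj)]

end Bivariate

end GeneratingFunctions

theorem eight_mul_sum_EMD_add_choose (s n : ℕ) :
    8 * ∑ p ∈ Finset.Nat.antidiagonalTuple (n + 1) s ×ˢ Finset.Nat.antidiagonalTuple (n + 1) s,
        EMD p.1 p.2 + (2 * s + 2 * n + 2).choose (2 * s + 1) =
      2 * (s + n + 1) * (2 * s + 2 * n).choose (2 * s) := by
  zify
  linear_combination 8 * sum_EMD_eq_coeff s n + coeff_Y_mul_truncatedCutSeries s n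

theorem add_one_mul_add_one_mul_choose (a b : ℕ) :
    (a + 1) * (b + 1) * (a + b + 2).choose (a + 1) =
      (a + b + 2) * (a + b + 1) * (a + b).choose a := by
  have absorb_left := Nat.add_one_mul_choose_eq (a + b + 1) a
  have absorb_right := Nat.choose_mul_succ_eq (a + b) a
  rw [show a + b + 1 - a = b + 1 by lia] at absorb_right
  linear_combination (b + 1) * absorb_left.symm + (a + b + 2) * absorb_right.symm

/-- Theorem 4.3 (closed form for the expected EMD): for compositions of `s` into `n`
parts, `(4s+4n-2) · Σ_{(α,β)} EMD(α,β) = s(n-1)·C(2s+2n, 2s+1)`; dividing both sides by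
`(4s+4n-2)·C(s+n-1,s)²` gives the expected value of the EMD over uniformly random pairs. -/
theorem expected_EMD_closed_form (s n : ℕ) (hn : 1 ≤ n) :
    (4 * s + 4 * n - 2) *
        (∑ p ∈ Finset.Nat.antidiagonalTuple n s ×ˢ Finset.Nat.antidiagonalTuple n s,
          EMD p.1 p.2)
      = s * (n - 1) * (2 * s + 2 * n).choose (2 * s + 1) := by
  obtain ⟨n, rfl⟩ := Nat.exists_eq_add_of_le' hn
  have closed_form := eight_mul_sum_EMD_add_choose s n
  have choose_ratio := add_one_mul_add_one_mul_choose (2 * s) (2 * n)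
  rw [show 4 * s + 4 * (n + 1) - 2 = 4 * s + 4 * n + 2 by lia, Nat.add_sub_cancel,
    show 2 * s + 2 * (n + 1) = 2 * s + 2 * n + 2 by ring]
  qify at closed_form choose_ratio ⊢
  linear_combination (4 * s + 4 * n + 2) / 8 * closed_form - 1 / 4 * choose_ratio
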